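/- For each t ≥ 0 there exists a unique real number X(t) such that U(t,X(t)) + U^r(t,X(t)) = 0. Moreover, there exist T₀ > 0 and a positive constant C (depending on p, μ, f, u₋, u₊) such that for all t ≥ T₀: |√(A/B) − X(t)·(1+t)^{−1/(p+1)}| ≤ C·(1+t)^{−(p−1)/(p+1)}. -/

import Mathlib

open Real MeasureTheory Filter Set

/-- The smooth monotone initial datum `w₀(x) = (w₋+w₊)/2 + ((w₊−w₋)/2)·tanh x`. -/
noncomputable def w0 (wm wp x : ℝ) : ℝ := (wm + wp) / 2 + ((wp - wm) / 2) * Real.tanh x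

/-- The Barenblatt-type profile `v(t,x) = t^{-1/(p+1)} (max(A - B(x t^{-1/(p+1)})², 0))^{1/(p-1)}`,
the spatial derivative of the contact wave for `p`-Laplacian type viscosity. -/
noncomputable def vfun (p A B t x : ℝ) : ℝ :=
  t ^ (-(1:ℝ)/(p+1)) * (max (A - B * (x * t ^ (-(1:ℝ)/(p+1)))^2) 0) ^ ((1:ℝ)/(p-1))

/-!
Write `H z` for the mass of the Barenblatt profile to the right of `z`. By self-similarity, and
because the normalization of `A` says that the total mass is `-u₋`, the contact wave equals
`-H (x (1 + t)^(-1/(p+1)))`, so the zero of the sum is where the decreasing tail `H` meets the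
strictly increasing rarefaction wave. There the rarefaction wave is only `O((1 + t)^(-p/(p+1)))`:
on the region `x ≤ √(A/B) (1 + t)^(1/(p+1))` the characteristic equation `y + t w₀(y) = x` forces
either `t w₀(y) = O((1 + t)^(1/(p+1)))`, or `y` so negative that `w₀(y)` is exponentially small.
Since the profile vanishes at its edge `√(A/B)` like the power `1/(p-1)`, the tail dominates
`(√(A/B) - z)^(p/(p-1))`, and inverting this power gives the rate `(1 + t)^(-(p-1)/(p+1))`.
-/

/-! ### Inverse of the characteristic speed -/

section InverseSpeed

variable {g ψ : ℝ → ℝ} {s : Set ℝ}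

lemma strictMonoOn_leftInverse_image (hg : StrictMonoOn g s) (hψ : LeftInvOn ψ g s) :
    StrictMonoOn ψ (g '' s) := by
  rintro _ ⟨u, hu, rfl⟩ _ ⟨v, hv, rfl⟩ huv
  rw [hψ hu, hψ hv]
  exact (hg.lt_iff_lt hu hv).1 huv

lemma lipschitzOnWith_leftInverse_image {K : NNReal}
    (hg : ∀ u ∈ s, ∀ v ∈ s, dist u v ≤ K * dist (g u) (g v)) (hψ : LeftInvOn ψ g s) :
    LipschitzOnWith K ψ (g '' s) := by
  refine LipschitzOnWith.of_dist_le_mul ?_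
  rintro _ ⟨u, hu, rfl⟩ _ ⟨v, hv, rfl⟩
  rw [hψ hu, hψ hv]
  exact hg u hu v hv

/-- Expansion constant: the minimum of the derivative, attained by compactness. -/
lemma exists_pos_mul_sub_le_sub {g' : ℝ → ℝ} {a b : ℝ} (hab : a ≤ b)
    (hg : ∀ u ∈ Icc a b, HasDerivWithinAt g (g' u) (Icc a b) u)
    (hg'_cont : ContinuousOn g' (Icc a b)) (hg'_pos : ∀ u ∈ Icc a b, 0 < g' u) :
    ∃ c, 0 < c ∧ ∀ u ∈ Icc a b, ∀ v ∈ Icc a b, u ≤ v → c * (v - u) ≤ g v - g u := by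
  obtain ⟨m, hm, hmin⟩ := isCompact_Icc.exists_isMinOn (nonempty_Icc.2 hab) hg'_cont
  have hderiv : ∀ u ∈ interior (Icc a b), HasDerivAt g (g' u) u := fun u hu =>
    (hg u (interior_subset hu)).hasDerivAt (mem_interior_iff_mem_nhds.1 hu)
  refine ⟨g' m, hg'_pos m hm, (convex_Icc a b).mul_sub_le_image_sub_of_le_deriv
    (fun u hu => (hg u hu).continuousWithinAt)
    (fun u hu => (hderiv u hu).differentiableAt.differentiableWithinAt) fun u hu => ?_⟩
  rw [(hderiv u hu).deriv]
  exact hmin (interior_subset hu)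

lemma leftInverse_of_mul_sub_le_sub {b c : ℝ} (hb : 0 < b) (hc : 0 < c)
    (hg : ContinuousOn g (Icc 0 b)) (hg_zero : g 0 = 0)
    (hgrow : ∀ u ∈ Icc 0 b, ∀ v ∈ Icc 0 b, u ≤ v → c * (v - u) ≤ g v - g u)
    (hψ : LeftInvOn ψ g (Icc 0 b)) :
    ContinuousOn ψ (Icc 0 (g b)) ∧ StrictMonoOn ψ (Icc 0 (g b)) ∧ ψ 0 = 0 ∧
      ∀ w ∈ Icc 0 (g b), ψ w ≤ c⁻¹ * w := by
  have hmono : StrictMonoOn g (Icc 0 b) := fun u hu v hv huv => by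
    linarith [hgrow u hu v hv huv.le, mul_pos hc (sub_pos.2 huv)]
  have hexpand : ∀ u ∈ Icc 0 b, ∀ v ∈ Icc 0 b, dist u v ≤ (c⁻¹).toNNReal * dist (g u) (g v) := by
    intro u hu v hv
    rw [Real.coe_toNNReal _ (inv_nonneg.2 hc.le), ← div_eq_inv_mul, le_div_iff₀' hc]
    rcases le_total u v with huv | hvu
    · rw [dist_comm u, dist_comm (g u), Real.dist_eq, Real.dist_eq,
        abs_of_nonneg (sub_nonneg.2 huv)]
      exact (hgrow u hu v hv huv).trans (le_abs_self _)
    · rw [Real.dist_eq, Real.dist_eq, abs_of_nonneg (sub_nonneg.2 hvu)]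
      exact (hgrow v hv u hu hvu).trans (le_abs_self _)
  have himage : g '' Icc 0 b = Icc 0 (g b) := by
    rw [hg.image_Icc_of_monotoneOn hb.le hmono.monotoneOn, hg_zero]
  have hzero : ψ 0 = 0 := by
    simpa only [hg_zero] using hψ (left_mem_Icc.2 hb.le)
  rw [← himage]
  refine ⟨(lipschitzOnWith_leftInverse_image hexpand hψ).continuousOn,
    strictMonoOn_leftInverse_image hmono hψ, hzero, ?_⟩
  rintro _ ⟨u, hu, rfl⟩
  rw [hψ hu, ← div_eq_inv_mul, le_div_iff₀' hc]
  simpa only [sub_zero, hg_zero] using hgrow 0 (left_mem_Icc.2 hb.le) u hu hu.1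

lemma hasDerivWithinAt_deriv_of_contDiffOn {f : ℝ → ℝ} (hf : Differentiable ℝ f)
    (hs : UniqueDiffOn ℝ s) (hfs : ContDiffOn ℝ 2 f s) {u : ℝ} (hu : u ∈ s) :
    HasDerivWithinAt (deriv f) (derivWithin (derivWithin f s) s u) s u := by
  have heq : ∀ v ∈ s, deriv f v = derivWithin f s v := fun v hv =>
    ((hf v).derivWithin (hs v hv)).symm
  exact (((hfs.derivWithin hs (m := 1) (by norm_num)).differentiableOn one_ne_zero u
    hu).hasDerivWithinAt).congr heq (heq u hu)

lemma deriv_eq_zero_of_forall_le {f : ℝ → ℝ} {a : ℝ} (hf : DifferentiableAt ℝ f a)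
    (hfzero : ∀ u ≤ a, f u = 0) : deriv f a = 0 := by
  rw [← hf.derivWithin (uniqueDiffOn_Iic a a self_mem_Iic : UniqueDiffWithinAt ℝ (Iic a) a),
    derivWithin_congr (f := 0) (s := Iic a) hfzero (hfzero a le_rfl), derivWithin_zero,
    Pi.zero_apply]

lemma exists_bound_leftInverse_deriv {f linv : ℝ → ℝ} {b : ℝ} (hb : 0 < b)
    (hf : Differentiable ℝ f) (hf2 : ContDiffOn ℝ 2 f (Ici 0)) (hfzero : ∀ u ≤ 0, f u = 0)
    (hconv : ∀ u, 0 ≤ u → 0 < derivWithin (derivWithin f (Ici 0)) (Ici 0) u)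
    (hlinv : LeftInvOn linv (deriv f) (Icc 0 b)) :
    0 < deriv f b ∧ ∃ M, ContinuousOn linv (Icc 0 (deriv f b)) ∧
      StrictMonoOn linv (Icc 0 (deriv f b)) ∧ linv 0 = 0 ∧
      ∀ w ∈ Icc 0 (deriv f b), linv w ≤ M * w := by
  have hunique : UniqueDiffOn ℝ (Ici (0 : ℝ)) := uniqueDiffOn_Ici 0
  have hzero : deriv f 0 = 0 := deriv_eq_zero_of_forall_le (hf 0) hfzero
  have hderiv : ∀ u ∈ Icc 0 b, HasDerivWithinAt (deriv f)
      (derivWithin (derivWithin f (Ici 0)) (Ici 0) u) (Icc 0 b) u := fun u hu =>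
    (hasDerivWithinAt_deriv_of_contDiffOn hf hunique hf2 hu.1).mono Icc_subset_Ici_self
  have hcont : ContinuousOn (derivWithin (derivWithin f (Ici 0)) (Ici 0)) (Icc 0 b) :=
    ((hf2.derivWithin hunique (m := 1) (by norm_num)).continuousOn_derivWithin hunique
      le_rfl).mono Icc_subset_Ici_self
  obtain ⟨c, hc, hgrow⟩ :=
    exists_pos_mul_sub_le_sub hb.le hderiv hcont fun u hu => hconv u hu.1
  have hpos : 0 < deriv f b := by
    have := hgrow 0 (left_mem_Icc.2 hb.le) b (right_mem_Icc.2 hb.le) hb.le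
    rw [hzero, sub_zero, sub_zero] at this
    exact (mul_pos hc hb).trans_le this
  exact ⟨hpos, c⁻¹, leftInverse_of_mul_sub_le_sub hb hc
    (fun u hu => (hderiv u hu).continuousWithinAt) hzero hgrow hlinv⟩

end InverseSpeed

/-! ### The approximate rarefaction wave -/

section Characteristics

variable {φ y : ℝ → ℝ}

lemma strictMono_of_add_monotone_eq (hφ : Monotone φ) (hy : ∀ x, y x + φ (y x) = x) :
    StrictMono y := by
  intro a b hab
  by_contra! hba
  linarith [hy a, hy b, hφ hba]

lemma lipschitzWith_one_of_add_monotone_eq (hφ : Monotone φ) (hy : ∀ x, y x + φ (y x) = x) :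
    LipschitzWith 1 y := by
  refine LipschitzWith.of_le_add fun a b => ?_
  rcases le_total (y a) (y b) with hab | hba
  · linarith [dist_nonneg (x := a) (y := b)]
  · linarith [hy a, hy b, hφ hba, le_abs_self (a - b), Real.dist_eq a b]

end Characteristics

lemma sigmoid_le_exp (x : ℝ) : sigmoid x ≤ exp x := by
  calc sigmoid x = sigmoid (-x) * exp x := by
        rw [← sigmoid_mul_rexp_neg, mul_assoc, ← exp_add, neg_add_cancel, exp_zero, mul_one]
    _ ≤ exp x := mul_le_of_le_one_left (exp_pos x).le (sigmoid_le_one _)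

lemma w0_eq_add_mul_sigmoid (wm wp x : ℝ) : w0 wm wp x = wm + (wp - wm) * sigmoid (2 * x) := by
  have hexp : exp (-(2 * x)) = exp (-x) * exp (-x) := by rw [← exp_add]; ring_nf
  have hinv : exp x * exp (-x) = 1 := by rw [← exp_add, add_neg_cancel, exp_zero]
  rw [w0, tanh_eq, sigmoid_def, hexp]
  field_simp
  linear_combination (wp - wm) * (2 * exp (-x)) * hinv

section InitialDatum

variable {wm wp : ℝ}

lemma continuous_w0 : Continuous (w0 wm wp) := by
  simp only [funext (w0_eq_add_mul_sigmoid wm wp)]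
  exact (((continuous_sigmoid.comp (by fun_prop : Continuous fun x : ℝ => 2 * x)).const_mul
    _).const_add _)

lemma strictMono_w0 (h : wm < wp) : StrictMono (w0 wm wp) := by
  intro a b hab
  simp only [w0_eq_add_mul_sigmoid]
  have hsig : sigmoid (2 * a) < sigmoid (2 * b) := sigmoid_lt (by linarith)
  linarith [mul_lt_mul_of_pos_left hsig (sub_pos.2 h)]

lemma w0_mem_Ioo (h : wm < wp) (x : ℝ) : w0 wm wp x ∈ Ioo wm wp := by
  rw [w0_eq_add_mul_sigmoid]
  have hd : 0 < wp - wm := sub_pos.2 h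
  constructor
  · linarith [mul_pos hd (sigmoid_pos (2 * x))]
  · linarith [mul_lt_of_lt_one_right hd (sigmoid_lt_one (2 * x))]

lemma w0_sub_le_mul_exp (h : wm ≤ wp) (x : ℝ) :
    w0 wm wp x - wm ≤ (wp - wm) * exp (2 * x) := by
  rw [w0_eq_add_mul_sigmoid, add_sub_cancel_left]
  exact mul_le_mul_of_nonneg_left (sigmoid_le_exp _) (sub_nonneg.2 h)

lemma tendsto_w0_atBot : Tendsto (w0 wm wp) atBot (nhds wm) := by
  have hlim : Tendsto (fun x : ℝ => wm + (wp - wm) * sigmoid (2 * x)) atBot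
      (nhds (wm + (wp - wm) * 0)) :=
    ((tendsto_sigmoid_atBot.comp (tendsto_id.const_mul_atBot two_pos)).const_mul _).const_add _
  simpa only [← w0_eq_add_mul_sigmoid, mul_zero, add_zero] using hlim

end InitialDatum

section Rarefaction

variable {L t : ℝ} {ψ y : ℝ → ℝ}

lemma w0_zero_mem_Icc (hL : 0 < L) (x : ℝ) : w0 0 L x ∈ Icc 0 L :=
  Ioo_subset_Icc_self (w0_mem_Ioo hL x)

lemma monotone_mul_w0 (hL : 0 < L) (ht : 0 ≤ t) : Monotone fun x => t * w0 0 L x :=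
  (strictMono_w0 hL).monotone.const_mul ht

lemma rarefaction_pos (hL : 0 < L) (hψ : StrictMonoOn ψ (Icc 0 L)) (hψ_zero : ψ 0 = 0) (x : ℝ) :
    0 < ψ (w0 0 L x) := by
  simpa only [hψ_zero] using
    hψ (left_mem_Icc.2 hL.le) (w0_zero_mem_Icc hL x) (w0_mem_Ioo hL x).1

lemma continuous_rarefaction (hL : 0 < L) (ht : 0 ≤ t) (hψ : ContinuousOn ψ (Icc 0 L))
    (hy : ∀ x, y x + t * w0 0 L (y x) = x) : Continuous fun x => ψ (w0 0 L (y x)) :=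
  have hy_cont : Continuous y :=
    (lipschitzWith_one_of_add_monotone_eq (monotone_mul_w0 hL ht) hy).continuous
  hψ.comp_continuous (continuous_w0.comp hy_cont) fun x => w0_zero_mem_Icc hL (y x)

lemma strictMono_rarefaction (hL : 0 < L) (ht : 0 ≤ t) (hψ : StrictMonoOn ψ (Icc 0 L))
    (hy : ∀ x, y x + t * w0 0 L (y x) = x) : StrictMono fun x => ψ (w0 0 L (y x)) := fun _ _ hab =>
  hψ (w0_zero_mem_Icc hL _) (w0_zero_mem_Icc hL _)
    (strictMono_w0 hL (strictMono_of_add_monotone_eq (monotone_mul_w0 hL ht) hy hab))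

lemma tendsto_rarefaction_atBot (hL : 0 < L) (ht : 0 ≤ t) (hψ : ContinuousOn ψ (Icc 0 L))
    (hy : ∀ x, y x + t * w0 0 L (y x) = x) :
    Tendsto (fun x => ψ (w0 0 L (y x))) atBot (nhds (ψ 0)) := by
  have hy_le : ∀ x, y x ≤ x := fun x => by
    linarith [hy x, mul_nonneg ht (w0_zero_mem_Icc hL (y x)).1]
  have hw : Tendsto (fun x => w0 0 L (y x)) atBot (nhdsWithin 0 (Icc 0 L)) :=
    tendsto_nhdsWithin_iff.2 ⟨tendsto_w0_atBot.comp (tendsto_atBot_mono hy_le tendsto_id),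
      .of_forall fun x => w0_zero_mem_Icc hL (y x)⟩
  exact (hψ 0 (left_mem_Icc.2 hL.le)).tendsto.comp hw

end Rarefaction

lemma exp_neg_le_mul_rpow_neg {p r : ℝ} (hp : 0 ≤ p) (hr : 0 < r) :
    exp (-r) ≤ p ^ p * r ^ (-p) := by
  have h : r ^ p ≤ p ^ p * exp r := by
    simpa only [abs_of_pos hr, abs_one, div_one, one_mul] using
      ProbabilityTheory.rpow_abs_le_mul_exp_abs r hp one_ne_zero
  rw [exp_neg, rpow_neg hr.le, ← div_eq_mul_inv, le_div_iff₀ (rpow_pos_of_pos hr p),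
    inv_mul_le_iff₀ (exp_pos r), mul_comm]
  exact h

/-- Either `y ≥ -m`, and the characteristic equation bounds `t * w0 0 L y`, or `y < -m` and the
exponential tail of `w0` takes over. -/
lemma w0_le_max_of_add_mul_w0_le {L t y b : ℝ} (hL : 0 ≤ L) (ht : 0 < t)
    (h : y + t * w0 0 L y ≤ b) (m : ℝ) :
    w0 0 L y ≤ max ((b + m) / t) (L * exp (-(2 * m))) := by
  rcases le_or_gt (-m) y with hy | hy
  · refine le_max_of_le_left ((le_div_iff₀' ht).2 ?_)
    linarith
  · refine le_max_of_le_right ?_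
    calc w0 0 L y ≤ L * exp (2 * y) := by simpa only [sub_zero] using w0_sub_le_mul_exp hL y
      _ ≤ L * exp (-(2 * m)) := by gcongr; linarith

lemma w0_le_mul_rpow_of_add_mul_w0_le {p L R t y : ℝ} (hp : 0 ≤ p) (hL : 0 ≤ L) (hR : 0 ≤ R)
    (ht : 1 ≤ t) (h : y + t * w0 0 L y ≤ R * (1 + t) ^ (1 / (p + 1))) :
    w0 0 L y ≤ (2 * (R + 1) + L * p ^ p) * (1 + t) ^ (-p / (p + 1)) := by
  have hs : 0 < 1 + t := by linarith
  have ht' : 0 < t := by linarith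
  have hp1 : p + 1 ≠ 0 := by positivity
  set r := (1 + t) ^ (1 / (p + 1)) with hr
  set d := (1 + t) ^ (-p / (p + 1)) with hd
  have hr_pos : 0 < r := rpow_pos_of_pos hs _
  have hd_pos : 0 < d := rpow_pos_of_pos hs _
  have hrd : r = (1 + t) * d := by
    rw [hr, hd, ← rpow_one_add' hs.le (by field_simp; simpa using hp1)]
    congr 1
    field_simp
    ring
  have hd_eq : d = r ^ (-p) := by
    rw [hr, hd, ← rpow_mul hs.le]
    congr 1
    ring
  have hnear : (R * r + r) / t ≤ 2 * (R + 1) * d := by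
    rw [div_le_iff₀ ht', hrd]
    nlinarith [mul_nonneg (mul_nonneg (by linarith : 0 ≤ R + 1) hd_pos.le) (sub_nonneg.2 ht)]
  have hfar : L * exp (-(2 * r)) ≤ L * p ^ p * d := by
    rw [mul_assoc, hd_eq]
    gcongr
    exact (exp_le_exp.2 (by linarith)).trans (exp_neg_le_mul_rpow_neg hp hr_pos)
  have hpp : 0 ≤ L * p ^ p * d := by positivity
  have hRd : 0 ≤ 2 * (R + 1) * d := by positivity
  rw [add_mul]
  exact (w0_le_max_of_add_mul_w0_le hL ht' h r).trans (max_le (by linarith) (by linarith))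

/-! ### The Barenblatt profile and its tail -/

/-- The self-similar Barenblatt profile `z ↦ (A - B z²)₊ ^ q`, of which `vfun` is a rescaling
with `q = 1 / (p - 1)`. -/
noncomputable def barenblatt (q A B z : ℝ) : ℝ := (max (A - B * z ^ 2) 0) ^ q

/-- The mass of the Barenblatt profile to the right of `z`. -/
noncomputable def barenblattTail (q A B z : ℝ) : ℝ := ∫ y in Ioi z, barenblatt q A B y

section Barenblatt

variable {q A B z : ℝ}

lemma continuous_barenblatt (hq : 0 ≤ q) : Continuous (barenblatt q A B) :=
  Continuous.rpow_const (by fun_prop) fun _ => Or.inr hq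

lemma barenblatt_nonneg : 0 ≤ barenblatt q A B z :=
  rpow_nonneg (le_max_right _ _) q

lemma barenblatt_abs : barenblatt q A B |z| = barenblatt q A B z := by
  rw [barenblatt, sq_abs, barenblatt]

lemma barenblatt_eq_zero (hq : q ≠ 0) (hB : 0 < B) (hz : √(A / B) ≤ |z|) :
    barenblatt q A B z = 0 := by
  have hAB : A / B ≤ z ^ 2 := by
    rw [← sq_abs]
    exact (sqrt_le_left (abs_nonneg z)).1 hz
  rw [div_le_iff₀' hB] at hAB
  rw [barenblatt, max_eq_right (sub_nonpos.2 hAB), zero_rpow hq]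

lemma integrable_barenblatt (hq : 0 < q) (hB : 0 < B) : Integrable (barenblatt q A B) := by
  refine (continuous_barenblatt hq.le).integrable_of_hasCompactSupport
    (HasCompactSupport.of_support_subset_isCompact
      (isCompact_Icc (a := -√(A / B)) (b := √(A / B))) fun z hz => ?_)
  by_contra hz'
  exact hz (barenblatt_eq_zero hq.ne' hB (not_le.1 fun h => hz' (abs_le.1 h)).le)

lemma mul_rpow_le_barenblatt (hq : 0 ≤ q) (hA : 0 ≤ A) (hB : 0 < B) (hz : 0 ≤ z)
    (hz' : z ≤ √(A / B)) : (B * √(A / B)) ^ q * (√(A / B) - z) ^ q ≤ barenblatt q A B z := by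
  have hBsq : B * √(A / B) ^ 2 = A := by
    rw [sq_sqrt (by positivity), mul_div_cancel₀ _ hB.ne']
  rw [← mul_rpow (by positivity) (sub_nonneg.2 hz'), barenblatt]
  refine rpow_le_rpow (mul_nonneg (by positivity) (sub_nonneg.2 hz')) (le_max_of_le_left ?_) hq
  have : 0 ≤ B * (z * (√(A / B) - z)) :=
    mul_nonneg hB.le (mul_nonneg hz (sub_nonneg.2 hz'))
  linarith

lemma barenblatt_sqrt_mul_cos (hA : 0 ≤ A) (hB : 0 < B) {θ : ℝ} (hθ : 0 ≤ sin θ) :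
    barenblatt q A B (√(A / B) * cos θ) = A ^ q * sin θ ^ (2 * q) := by
  have hbase : A - B * (√(A / B) * cos θ) ^ 2 = A * sin θ ^ 2 := by
    rw [mul_pow, sq_sqrt (by positivity), cos_sq']
    field_simp
    ring
  rw [barenblatt, hbase, max_eq_left (by positivity), mul_rpow hA (by positivity), rpow_mul hθ,
    rpow_two]

lemma antitone_barenblattTail (hq : 0 < q) (hB : 0 < B) : Antitone (barenblattTail q A B) :=
  fun _ _ hab => setIntegral_mono_set (integrable_barenblatt hq hB).integrableOn
    (.of_forall fun _ => barenblatt_nonneg) (Ioi_subset_Ioi hab).eventuallyLE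

lemma integral_add_barenblattTail (hq : 0 < q) (hB : 0 < B) (a b : ℝ) :
    (∫ y in a..b, barenblatt q A B y) + barenblattTail q A B b = barenblattTail q A B a :=
  intervalIntegral.integral_interval_add_Ioi (integrable_barenblatt hq hB).integrableOn
    (integrable_barenblatt hq hB).integrableOn

lemma continuous_barenblattTail (hq : 0 < q) (hB : 0 < B) : Continuous (barenblattTail q A B) := by
  have heq : barenblattTail q A B =
      fun z => barenblattTail q A B 0 - ∫ y in (0 : ℝ)..z, barenblatt q A B y :=
    funext fun z => eq_sub_of_add_eq' (integral_add_barenblattTail hq hB 0 z)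
  rw [heq]
  exact continuous_const.sub ((integrable_barenblatt hq hB).continuous_primitive 0)

lemma barenblattTail_eq_zero (hq : q ≠ 0) (hB : 0 < B) (hz : √(A / B) ≤ z) :
    barenblattTail q A B z = 0 :=
  setIntegral_eq_zero_of_forall_eq_zero fun y hy =>
    barenblatt_eq_zero hq hB ((hz.trans (mem_Ioi.1 hy).le).trans (le_abs_self y))

lemma integral_eq_barenblattTail (hq : 0 < q) (hB : 0 < B) (z : ℝ) :
    ∫ y in z..√(A / B), barenblatt q A B y = barenblattTail q A B z := by
  rw [← integral_add_barenblattTail hq hB z √(A / B), barenblattTail_eq_zero hq.ne' hB le_rfl,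
    add_zero]

/-- Substitution `z = √(A/B) cos θ`. -/
lemma barenblattTail_zero (hq : 0 < q) (hA : 0 ≤ A) (hB : 0 < B) :
    barenblattTail q A B 0 =
      A ^ q * √(A / B) * ∫ θ in (0 : ℝ)..(π / 2), sin θ ^ (2 * q + 1) := by
  have hsubst := intervalIntegral.integral_comp_mul_deriv (a := π / 2) (b := 0)
    (fun θ _ => (hasDerivAt_cos θ).const_mul √(A / B)) (by fun_prop)
    (continuous_barenblatt (A := A) (B := B) hq.le)
  simp only [cos_zero, cos_pi_div_two, mul_one, mul_zero] at hsubst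
  rw [← integral_eq_barenblattTail hq hB, ← hsubst, intervalIntegral.integral_symm,
    ← intervalIntegral.integral_neg, ← intervalIntegral.integral_const_mul]
  refine intervalIntegral.integral_congr fun θ hθ => ?_
  rw [uIcc_of_le (by positivity)] at hθ
  have hsin : 0 ≤ sin θ := sin_nonneg_of_nonneg_of_le_pi hθ.1 (by linarith [hθ.2, pi_pos])
  simp only [Function.comp, barenblatt_sqrt_mul_cos hA hB hsin,
    rpow_add_of_nonneg hsin (by positivity : 0 ≤ 2 * q) zero_le_one, rpow_one]
  ring

lemma integral_barenblatt (hq : 0 < q) (hA : 0 ≤ A) (hB : 0 < B) :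
    ∫ z, barenblatt q A B z = 2 * A ^ (q + 1 / 2) * B ^ (-(1 : ℝ) / 2) *
      ∫ θ in (0 : ℝ)..(π / 2), sin θ ^ (2 * q + 1) := by
  calc ∫ z, barenblatt q A B z = ∫ z, barenblatt q A B |z| := by simp only [barenblatt_abs]
    _ = 2 * barenblattTail q A B 0 := integral_comp_abs
    _ = _ := by
      rw [barenblattTail_zero hq hA hB, sqrt_div hA, sqrt_eq_rpow, sqrt_eq_rpow, neg_div,
        rpow_neg hB.le, rpow_add_of_nonneg hA hq.le (by norm_num)]
      ring

lemma mul_rpow_le_barenblattTail (hq : 0 < q) (hA : 0 ≤ A) (hB : 0 < B) (hz : 0 ≤ z)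
    (hz' : z ≤ √(A / B)) :
    (B * √(A / B)) ^ q / (q + 1) * (√(A / B) - z) ^ (q + 1) ≤ barenblattTail q A B z := by
  have hcont : Continuous fun y => (B * √(A / B)) ^ q * (√(A / B) - y) ^ q :=
    continuous_const.mul ((continuous_sub_left _).rpow_const fun _ => Or.inr hq.le)
  calc (B * √(A / B)) ^ q / (q + 1) * (√(A / B) - z) ^ (q + 1)
      = ∫ y in z..√(A / B), (B * √(A / B)) ^ q * (√(A / B) - y) ^ q := by
        rw [intervalIntegral.integral_const_mul,
          intervalIntegral.integral_comp_sub_left (fun x => x ^ q), sub_self,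
          integral_rpow (Or.inl (by linarith)), zero_rpow (by positivity), sub_zero]
        ring
    _ ≤ ∫ y in z..√(A / B), barenblatt q A B y :=
        intervalIntegral.integral_mono_on hz' (hcont.intervalIntegrable _ _)
          ((continuous_barenblatt hq.le).intervalIntegrable _ _)
          fun y hy => mul_rpow_le_barenblatt hq.le hA hB (hz.trans hy.1) hy.2
    _ = barenblattTail q A B z := integral_eq_barenblattTail hq hB z

lemma barenblattTail_zero_pos (hq : 0 < q) (hA : 0 < A) (hB : 0 < B) :
    0 < barenblattTail q A B 0 := by
  have hR : 0 < √(A / B) := sqrt_pos.2 (div_pos hA hB)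
  refine lt_of_lt_of_le ?_ (mul_rpow_le_barenblattTail hq hA.le hB le_rfl hR.le)
  rw [sub_zero]
  positivity

lemma abs_sqrt_sub_le_of_barenblattTail_le {ε : ℝ} (hq : 0 < q) (hA : 0 < A) (hB : 0 < B)
    (hpos : 0 < barenblattTail q A B z) (hle : barenblattTail q A B z ≤ ε)
    (hε : ε < barenblattTail q A B 0) :
    |√(A / B) - z| ≤ ((q + 1) / (B * √(A / B)) ^ q * ε) ^ (1 / (q + 1)) := by
  have : 0 < √(A / B) := sqrt_pos.2 (div_pos hA hB)
  have hz_lt : z < √(A / B) := by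
    by_contra! h
    exact hpos.ne' (barenblattTail_eq_zero hq.ne' hB h)
  have hz_nonneg : 0 ≤ z := by
    by_contra! h
    linarith [antitone_barenblattTail (A := A) hq hB h.le]
  have hlower := (mul_rpow_le_barenblattTail hq hA.le hB hz_nonneg hz_lt.le).trans hle
  rw [abs_of_pos (sub_pos.2 hz_lt), one_div,
    le_rpow_inv_iff_of_pos (sub_nonneg.2 hz_lt.le) (by positivity [hpos.trans_le hle])
      (by positivity)]
  rw [div_mul_eq_mul_div, div_le_iff₀ (by positivity)] at hlower
  rw [div_mul_eq_mul_div, le_div_iff₀ (by positivity)]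
  linarith

end Barenblatt

/-! ### The contact wave -/

/-- The viscous contact wave connecting `um` to `0`: the primitive of the Barenblatt-type profile
with value `um` at `-∞`; the profile is taken at time `1 + t`. -/
noncomputable def contactWave (p um A B t x : ℝ) : ℝ :=
  um + ∫ y in Iio x, vfun p A B (1 + t) y

section ContactWave

variable {p um A B t : ℝ}

lemma vfun_eq_mul_barenblatt (p A B t x : ℝ) :
    vfun p A B t x = t ^ (-(1 : ℝ) / (p + 1)) *
      barenblatt (1 / (p - 1)) A B (t ^ (-(1 : ℝ) / (p + 1)) * x) := by
  rw [vfun, barenblatt, mul_comm x]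

lemma integral_Iio_vfun (hp : 1 < p) (hB : 0 < B) (ht : 0 < t) (x : ℝ) :
    ∫ y in Iio x, vfun p A B t y = (∫ z, barenblatt (1 / (p - 1)) A B z) -
      barenblattTail (1 / (p - 1)) A B (x * t ^ (-(1 : ℝ) / (p + 1))) := by
  have hq : 0 < 1 / (p - 1) := one_div_pos.2 (sub_pos.2 hp)
  have hk : 0 < t ^ (-(1 : ℝ) / (p + 1)) := rpow_pos_of_pos ht _
  simp only [vfun_eq_mul_barenblatt]
  set k := t ^ (-(1 : ℝ) / (p + 1))
  set b := barenblatt (1 / (p - 1)) A B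
  have hint : Integrable fun y => k * b (k * y) :=
    ((integrable_barenblatt hq hB).comp_mul_left' hk.ne').const_mul k
  have htotal : ∫ y, k * b (k * y) = ∫ z, b z := by
    rw [integral_const_mul, Measure.integral_comp_mul_left, abs_of_pos (inv_pos.2 hk), smul_eq_mul,
      mul_inv_cancel_left₀ hk.ne']
  have htail : ∫ y in Ici x, k * b (k * y) = barenblattTail (1 / (p - 1)) A B (x * k) := by
    rw [integral_Ici_eq_integral_Ioi, integral_const_mul, integral_comp_mul_left_Ioi _ _ hk,
      smul_eq_mul, mul_inv_cancel_left₀ hk.ne', mul_comm k x, barenblattTail]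
  rw [← htotal, ← htail]
  exact eq_sub_of_add_eq
    (intervalIntegral.integral_Iio_add_Ici hint.integrableOn hint.integrableOn)

lemma contactWave_eq_neg_barenblattTail (hp : 1 < p) (hA : 0 ≤ A) (hB : 0 < B)
    (hnorm : 2 * A ^ ((p + 1) / (2 * (p - 1))) * B ^ (-(1 : ℝ) / 2) *
      (∫ θ in (0 : ℝ)..(π / 2), sin θ ^ ((p + 1) / (p - 1))) = -um) (ht : 0 ≤ t) (x : ℝ) :
    contactWave p um A B t x =
      -barenblattTail (1 / (p - 1)) A B (x * (1 + t) ^ (-(1 : ℝ) / (p + 1))) := by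
  have hp1 : 0 < p - 1 := sub_pos.2 hp
  have hexpA : (p + 1) / (2 * (p - 1)) = 1 / (p - 1) + 1 / 2 := by field_simp; ring
  have hexpSin : (p + 1) / (p - 1) = 2 * (1 / (p - 1)) + 1 := by field_simp; ring
  have hmass : ∫ z, barenblatt (1 / (p - 1)) A B z = -um := by
    rw [integral_barenblatt (one_div_pos.2 hp1) hA hB, ← hexpA, ← hexpSin, hnorm]
  rw [contactWave, integral_Iio_vfun hp hB (by linarith), hmass]
  ring

end ContactWave

/-! ### The zero of the composite wave -/

section Crossing

variable {q A B L M : ℝ} {ψ : ℝ → ℝ}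

lemma existsUnique_rarefaction_eq_barenblattTail {k t : ℝ} {y : ℝ → ℝ} (hq : 0 < q) (hA : 0 < A)
    (hB : 0 < B) (hL : 0 < L) (hk : 0 < k) (ht : 0 ≤ t) (hψ_cont : ContinuousOn ψ (Icc 0 L))
    (hψ_mono : StrictMonoOn ψ (Icc 0 L)) (hψ_zero : ψ 0 = 0)
    (hy : ∀ x, y x + t * w0 0 L (y x) = x) :
    ∃! x, ψ (w0 0 L (y x)) = barenblattTail q A B (x * k) := by
  have hmono : StrictMono fun x => ψ (w0 0 L (y x)) - barenblattTail q A B (x * k) := by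
    intro a b hab
    have hrare : ψ (w0 0 L (y a)) < ψ (w0 0 L (y b)) :=
      strictMono_rarefaction hL ht hψ_mono hy hab
    have htail : barenblattTail q A B (b * k) ≤ barenblattTail q A B (a * k) :=
      antitone_barenblattTail hq hB (by gcongr)
    dsimp only
    linarith
  have hcont : Continuous fun x => ψ (w0 0 L (y x)) - barenblattTail q A B (x * k) :=
    (continuous_rarefaction hL ht hψ_cont hy).sub
      ((continuous_barenblattTail hq hB).comp (continuous_mul_const k))
  have hright : ∃ x, 0 ≤ ψ (w0 0 L (y x)) - barenblattTail q A B (x * k) := by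
    refine ⟨√(A / B) / k, ?_⟩
    rw [div_mul_cancel₀ _ hk.ne', barenblattTail_eq_zero hq.ne' hB le_rfl, sub_zero]
    exact (rarefaction_pos hL hψ_mono hψ_zero _).le
  have hleft : ∃ x, ψ (w0 0 L (y x)) - barenblattTail q A B (x * k) ≤ 0 := by
    have hsmall : ∀ᶠ x in atBot, ψ (w0 0 L (y x)) < barenblattTail q A B 0 :=
      (tendsto_rarefaction_atBot hL ht hψ_cont hy).eventually_lt_const
        (by rw [hψ_zero]; exact barenblattTail_zero_pos hq hA hB)
    obtain ⟨x, hx, hx_nonpos⟩ := (hsmall.and (eventually_le_atBot 0)).exists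
    have htail : barenblattTail q A B 0 ≤ barenblattTail q A B (x * k) :=
      antitone_barenblattTail hq hB (mul_nonpos_of_nonpos_of_nonneg hx_nonpos hk.le)
    exact ⟨x, by linarith⟩
  obtain ⟨x, hx⟩ := mem_range_of_exists_le_of_exists_ge hcont hleft hright
  exact ⟨x, sub_eq_zero.1 hx, fun x' hx' => hmono.injective ((sub_eq_zero.2 hx').trans hx.symm)⟩

lemma rarefaction_le_mul_rpow_of_barenblattTail_pos {p t x y : ℝ} (hp : 0 ≤ p) (hq : q ≠ 0)
    (hB : 0 < B) (hL : 0 < L) (hM : 0 ≤ M) (ht : 1 ≤ t)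
    (hψ_le : ∀ w ∈ Icc 0 L, ψ w ≤ M * w) (hy : y + t * w0 0 L y = x)
    (hpos : 0 < barenblattTail q A B (x * (1 + t) ^ (-(1 : ℝ) / (p + 1)))) :
    ψ (w0 0 L y) ≤
      M * (2 * (√(A / B) + 1) + L * p ^ p) * (1 + t) ^ (-p / (p + 1)) := by
  have hs : 0 < 1 + t := by linarith
  have hk : 0 < (1 + t) ^ (1 / (p + 1)) := rpow_pos_of_pos hs _
  have hx : x ≤ √(A / B) * (1 + t) ^ (1 / (p + 1)) := by
    by_contra! h
    refine hpos.ne' (barenblattTail_eq_zero hq hB ?_)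
    rw [neg_div, rpow_neg hs.le, ← div_eq_mul_inv]
    exact ((lt_div_iff₀ hk).2 h).le
  calc ψ (w0 0 L y) ≤ M * w0 0 L y := hψ_le _ (w0_zero_mem_Icc hL y)
    _ ≤ M * ((2 * (√(A / B) + 1) + L * p ^ p) * (1 + t) ^ (-p / (p + 1))) := by
        gcongr
        exact w0_le_mul_rpow_of_add_mul_w0_le hp hL.le (sqrt_nonneg _) ht (hy.trans_le hx)
    _ = _ := (mul_assoc _ _ _).symm

lemma eventually_mul_rpow_neg_lt (D : ℝ) {a ε : ℝ} (ha : 0 < a) (hε : 0 < ε) :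
    ∀ᶠ t : ℝ in atTop, D * (1 + t) ^ (-a) < ε := by
  have hlim : Tendsto (fun t : ℝ => D * (1 + t) ^ (-a)) atTop (nhds (D * 0)) :=
    ((tendsto_rpow_neg_atTop ha).comp (tendsto_atTop_add_const_left _ 1 tendsto_id)).const_mul D
  exact hlim.eventually_lt_const (by rwa [mul_zero])

lemma exists_abs_sqrt_sub_le_of_rarefaction_eq_barenblattTail {p : ℝ} {Y : ℝ → ℝ → ℝ} (hp : 1 < p)
    (hA : 0 < A) (hB : 0 < B) (hL : 0 < L) (hψ_mono : StrictMonoOn ψ (Icc 0 L))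
    (hψ_zero : ψ 0 = 0) (hψ_le : ∀ w ∈ Icc 0 L, ψ w ≤ M * w)
    (hY : ∀ t x, 0 ≤ t → Y t x + t * w0 0 L (Y t x) = x) :
    ∃ T₀, 0 < T₀ ∧ ∃ C, 0 < C ∧ ∀ t, T₀ ≤ t → ∀ X,
      ψ (w0 0 L (Y t X)) = barenblattTail (1 / (p - 1)) A B (X * (1 + t) ^ (-(1 : ℝ) / (p + 1))) →
      |√(A / B) - X * (1 + t) ^ (-(1 : ℝ) / (p + 1))| ≤ C * (1 + t) ^ (-(p - 1) / (p + 1)) := by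
  have hp1 : 0 < p - 1 := sub_pos.2 hp
  have hq : 0 < 1 / (p - 1) := one_div_pos.2 hp1
  have : 0 < √(A / B) := sqrt_pos.2 (div_pos hA hB)
  have hM : 0 < M := by
    have hψL : 0 < ψ L := by
      simpa only [hψ_zero] using hψ_mono (left_mem_Icc.2 hL.le) (right_mem_Icc.2 hL.le) hL
    exact pos_of_mul_pos_left (hψL.trans_le (hψ_le L (right_mem_Icc.2 hL.le))) hL.le
  set D := M * (2 * (√(A / B) + 1) + L * p ^ p)
  set K := (1 / (p - 1) + 1) / (B * √(A / B)) ^ (1 / (p - 1))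
  have hKD : 0 < K * D := by positivity
  obtain ⟨T, hT⟩ := eventually_atTop.1 (eventually_mul_rpow_neg_lt D
    (div_pos (by linarith) (by linarith) : 0 < p / (p + 1)) (barenblattTail_zero_pos hq hA hB))
  refine ⟨max T 1, by positivity, (K * D) ^ ((p - 1) / p), by positivity, fun t ht X hX => ?_⟩
  have ht1 : 1 ≤ t := (le_max_right T 1).trans ht
  have hs : 0 < 1 + t := by linarith
  have hsmall := hT t ((le_max_left T 1).trans ht)
  rw [← neg_div] at hsmall
  have hpos := (rarefaction_pos hL hψ_mono hψ_zero (Y t X)).trans_eq hX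
  have hle := hX.symm.trans_le (rarefaction_le_mul_rpow_of_barenblattTail_pos (by linarith) hq.ne'
    hB hL hM.le ht1 hψ_le (hY t X (by linarith)) hpos)
  calc |√(A / B) - X * (1 + t) ^ (-(1 : ℝ) / (p + 1))|
      ≤ (K * (D * (1 + t) ^ (-p / (p + 1)))) ^ (1 / (1 / (p - 1) + 1)) :=
        abs_sqrt_sub_le_of_barenblattTail_le hq hA hB hpos hle hsmall
    _ = (K * D * (1 + t) ^ (-p / (p + 1))) ^ ((p - 1) / p) := by
        congr 1
        · ring
        · field_simp
          ring
    _ = (K * D) ^ ((p - 1) / p) * (1 + t) ^ (-(p - 1) / (p + 1)) := by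
        rw [mul_rpow hKD.le (by positivity), ← rpow_mul hs.le]
        congr 2
        field_simp

end Crossing

theorem stmt_18_general {p um A B L M : ℝ} {ψ : ℝ → ℝ} {Y : ℝ → ℝ → ℝ} (hp : 1 < p) (hA : 0 < A)
    (hB : 0 < B) (hL : 0 < L)
    (hnorm : 2 * A ^ ((p + 1) / (2 * (p - 1))) * B ^ (-(1 : ℝ) / 2) *
      (∫ θ in (0 : ℝ)..(π / 2), sin θ ^ ((p + 1) / (p - 1))) = -um)
    (hψ_cont : ContinuousOn ψ (Icc 0 L)) (hψ_mono : StrictMonoOn ψ (Icc 0 L)) (hψ_zero : ψ 0 = 0)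
    (hψ_le : ∀ w ∈ Icc 0 L, ψ w ≤ M * w)
    (hY : ∀ t x, 0 ≤ t → Y t x + t * w0 0 L (Y t x) = x) :
    (∀ t, 0 ≤ t → ∃! X, contactWave p um A B t X + ψ (w0 0 L (Y t X)) = 0) ∧
    ∃ T₀, 0 < T₀ ∧ ∃ C, 0 < C ∧ ∀ t, T₀ ≤ t → ∀ X,
      contactWave p um A B t X + ψ (w0 0 L (Y t X)) = 0 →
      |√(A / B) - X * (1 + t) ^ (-(1 : ℝ) / (p + 1))| ≤ C * (1 + t) ^ (-(p - 1) / (p + 1)) := by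
  have hzero_iff : ∀ t, 0 ≤ t → ∀ X, contactWave p um A B t X + ψ (w0 0 L (Y t X)) = 0 ↔
      ψ (w0 0 L (Y t X)) =
        barenblattTail (1 / (p - 1)) A B (X * (1 + t) ^ (-(1 : ℝ) / (p + 1))) := by
    intro t ht X
    rw [contactWave_eq_neg_barenblattTail hp hA.le hB hnorm ht, neg_add_eq_zero, eq_comm]
  refine ⟨fun t ht => ?_, ?_⟩
  · simp only [hzero_iff t ht]
    exact existsUnique_rarefaction_eq_barenblattTail (one_div_pos.2 (sub_pos.2 hp)) hA hB hL
      (by positivity) ht hψ_cont hψ_mono hψ_zero fun x => hY t x ht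
  · obtain ⟨T₀, hT₀, C, hC, hrate⟩ := exists_abs_sqrt_sub_le_of_rarefaction_eq_barenblattTail
      hp hA hB hL hψ_mono hψ_zero hψ_le hY
    exact ⟨T₀, hT₀, C, hC, fun t ht X hX =>
      hrate t ht X ((hzero_iff t (hT₀.le.trans ht) X).1 hX)⟩

theorem stmt_18 (p μ um up A B : ℝ)
    (hp : 1 < p) (hμ : 0 < μ) (hum : um < 0) (hup : 0 < up)
    (f : ℝ → ℝ) (hf1 : ContDiff ℝ 1 f) (hf3 : ContDiffOn ℝ 3 f (Set.Ici 0))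
    (hfzero : ∀ u : ℝ, u ≤ 0 → f u = 0)
    (hconv : ∀ u : ℝ, 0 ≤ u →
      0 < derivWithin (derivWithin f (Set.Ici 0)) (Set.Ici 0) u)
    (linv : ℝ → ℝ) (hlinv : ∀ u ∈ Set.Icc (0:ℝ) up, linv (deriv f u) = u)
    (Y : ℝ → ℝ → ℝ)
    (hY : ∀ t x : ℝ, 0 ≤ t → Y t x + t * w0 0 (deriv f up) (Y t x) = x)
    (hB : B = (p - 1) / (2 * μ * p * (p + 1))) (hA : 0 < A)
    (hnorm : 2 * A ^ ((p+1)/(2*(p-1))) * B ^ (-(1:ℝ)/2) *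
      (∫ θ in (0:ℝ)..(Real.pi/2), Real.sin θ ^ ((p+1)/(p-1))) = -um) :
    -- `Ur` is the smooth approximate rarefaction wave connecting `0` to `u₊`,
    -- `U` is the viscous contact wave connecting `u₋` to `0`.
    let Ur : ℝ → ℝ → ℝ := fun t x => linv (w0 0 (deriv f up) (Y t x))
    let U : ℝ → ℝ → ℝ := fun t x => um + ∫ y in Set.Iio x, vfun p A B (1 + t) y
    (∀ t : ℝ, 0 ≤ t → ∃! X : ℝ, U t X + Ur t X = 0) ∧
    (∃ T₀ : ℝ, 0 < T₀ ∧ ∃ C : ℝ, 0 < C ∧ ∀ t : ℝ, T₀ ≤ t → ∀ X : ℝ,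
      U t X + Ur t X = 0 →
      |Real.sqrt (A / B) - X * (1 + t) ^ (-(1:ℝ)/(p+1))|
        ≤ C * (1 + t) ^ (-(p - 1) / (p + 1))) := by
  have hB_pos : 0 < B := by
    rw [hB]
    exact div_pos (sub_pos.2 hp) (by positivity)
  obtain ⟨hL, M, hcont, hmono, hzero, hle⟩ := exists_bound_leftInverse_deriv hup
    (hf1.differentiable one_ne_zero) (hf3.of_le (by norm_num)) hfzero hconv hlinv
  exact stmt_18_general hp hA hB_pos hL hnorm hcont hmono hzero hle hY
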